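/- There exists T_0 > 0 such that for every T > T_0 and every γ > 0, the equality γ² − γ·tanh(γT)·tanh(T) − sech²(T) = 0 holds if and only if γ = 1. In particular, for every T > 0 one has the identity 1 − tanh²(T) − sech²(T) = 0. -/

import Mathlib

/-!
Since `sech² = 1 - tanh²`, the left-hand side of the equation splits as
`(γ² - 1) sech² T + γ tanh T (γ tanh T - tanh (γT))`.  As it is even in `γ` and in `T`, we may take
`γ, T ≥ 0`.  Concavity of `tanh` on `[0, ∞)` then shows that the second summand is nonnegative for
`γ ≥ 1` and nonpositive for `γ ≤ 1`, so it can never cancel the first one.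
-/

open Set Real

theorem one_sub_tanh_sq (x : ℝ) : 1 - tanh x ^ 2 = (cosh x)⁻¹ ^ 2 := by
  have := (cosh_pos x).ne'
  rw [tanh_eq_sinh_div_cosh]
  field_simp
  rw [cosh_sq, add_sub_cancel_left]

theorem tanh_nonneg {x : ℝ} (hx : 0 ≤ x) : 0 ≤ tanh x := by
  rw [tanh_eq_sinh_div_cosh]
  exact div_nonneg (sinh_nonneg_iff.2 hx) (cosh_pos x).le

theorem hasDerivAt_tanh (x : ℝ) : HasDerivAt tanh ((cosh x)⁻¹ ^ 2) x := by
  have h := (hasDerivAt_sinh x).div (hasDerivAt_cosh x) (cosh_pos x).ne'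
  have h_val : (cosh x * cosh x - sinh x * sinh x) / cosh x ^ 2 = (cosh x)⁻¹ ^ 2 := by
    rw [← sq, ← sq, cosh_sq_sub_sinh_sq, one_div, inv_pow]
  rw [h_val] at h
  exact h.congr_of_eventuallyEq (.of_forall tanh_eq_sinh_div_cosh)

theorem concaveOn_tanh_Ici : ConcaveOn ℝ (Ici 0) tanh := by
  refine AntitoneOn.concaveOn_of_deriv (convex_Ici 0)
    (fun x _ ↦ (hasDerivAt_tanh x).continuousAt.continuousWithinAt)
    (fun x _ ↦ (hasDerivAt_tanh x).differentiableAt.differentiableWithinAt) ?_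
  rw [interior_Ici]
  intro x (hx : 0 < x) y (hy : 0 < y) hxy
  rw [(hasDerivAt_tanh x).deriv, (hasDerivAt_tanh y).deriv]
  have h_cosh : cosh x ≤ cosh y := cosh_strictMonoOn.monotoneOn hx.le hy.le hxy
  have := cosh_pos x
  gcongr

theorem mul_tanh_le_tanh_mul {c x : ℝ} (hc₀ : 0 ≤ c) (hc₁ : c ≤ 1) (hx : 0 ≤ x) :
    c * tanh x ≤ tanh (c * x) := by
  simpa using concaveOn_tanh_Ici.2 hx self_mem_Ici hc₀ (sub_nonneg.2 hc₁) (add_sub_cancel c 1)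

theorem tanh_mul_le_mul_tanh {c x : ℝ} (hc : 1 ≤ c) (hx : 0 ≤ x) :
    tanh (c * x) ≤ c * tanh x := by
  have hc₀ : 0 < c := one_pos.trans_le hc
  have h := mul_tanh_le_tanh_mul (inv_nonneg.2 hc₀.le) (inv_le_one_of_one_le₀ hc)
    (mul_nonneg hc₀.le hx)
  rwa [inv_mul_cancel_left₀ hc₀.ne', inv_mul_le_iff₀ hc₀] at h

theorem sq_sub_mul_tanh_mul_tanh_sub_sech_sq (γ T : ℝ) :
    γ ^ 2 - γ * tanh (γ * T) * tanh T - (cosh T)⁻¹ ^ 2 =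
      (γ ^ 2 - 1) * (cosh T)⁻¹ ^ 2 + γ * tanh T * (γ * tanh T - tanh (γ * T)) := by
  rw [← one_sub_tanh_sq]
  ring

theorem neumann_odd_eigenvalue_equation_general (γ T : ℝ) :
    γ ^ 2 - γ * tanh (γ * T) * tanh T - (cosh T)⁻¹ ^ 2 = 0 ↔ |γ| = 1 := by
  wlog hT : 0 ≤ T generalizing T
  · simpa using this (-T) (by linarith)
  wlog hγ : 0 ≤ γ generalizing γ
  · simpa using this (-γ) (by linarith)
  have h_sech : 0 < (cosh T)⁻¹ ^ 2 := pow_pos (inv_pos.2 (cosh_pos T)) 2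
  have h_coeff : 0 ≤ γ * tanh T := mul_nonneg hγ (tanh_nonneg hT)
  rw [sq_sub_mul_tanh_mul_tanh_sub_sech_sq, abs_of_nonneg hγ]
  rcases lt_trichotomy γ 1 with hlt | rfl | hgt
  · have h_first : (γ ^ 2 - 1) * (cosh T)⁻¹ ^ 2 < 0 :=
      mul_neg_of_neg_of_pos (sub_neg.2 (pow_lt_one₀ hγ hlt two_ne_zero)) h_sech
    have h_second : γ * tanh T * (γ * tanh T - tanh (γ * T)) ≤ 0 :=
      mul_nonpos_of_nonneg_of_nonpos h_coeff (sub_nonpos.2 (mul_tanh_le_tanh_mul hγ hlt.le hT))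
    exact iff_of_false (add_neg_of_neg_of_nonpos h_first h_second).ne hlt.ne
  · simp
  · have h_first : 0 < (γ ^ 2 - 1) * (cosh T)⁻¹ ^ 2 :=
      mul_pos (sub_pos.2 (one_lt_pow₀ hgt two_ne_zero)) h_sech
    have h_second : 0 ≤ γ * tanh T * (γ * tanh T - tanh (γ * T)) :=
      mul_nonneg h_coeff (sub_nonneg.2 (tanh_mul_le_mul_tanh hgt.le hT))
    exact iff_of_false (add_pos_of_pos_of_nonneg h_first h_second).ne' hgt.ne'

/-- There exists `T₀ > 0` such that for every `T > T₀` and every `γ > 0` the equality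
`γ² - γ·tanh(γT)·tanh(T) - sech²(T) = 0` holds if and only if `γ = 1`; in particular, for
every `T > 0` one has the identity `1 - tanh²(T) - sech²(T) = 0`. -/
theorem neumann_odd_eigenvalue_equation :
    (∃ T₀ : ℝ, 0 < T₀ ∧ ∀ T : ℝ, T₀ < T → ∀ γ : ℝ, 0 < γ →
      (γ ^ 2 - γ * Real.tanh (γ * T) * Real.tanh T - ((Real.cosh T)⁻¹) ^ 2 = 0 ↔ γ = 1)) ∧
    ∀ T : ℝ, 0 < T → 1 - (Real.tanh T) ^ 2 - ((Real.cosh T)⁻¹) ^ 2 = 0 := by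
  refine ⟨⟨1, one_pos, fun T _ γ hγ ↦ ?_⟩, fun T _ ↦ sub_eq_zero.2 (one_sub_tanh_sq T)⟩
  rw [neumann_odd_eigenvalue_equation_general, abs_of_pos hγ]
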